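/- Let L ∈ ℝ^{n×n} be symmetric positive semidefinite with zero as a simple eigenvalue, and with eigenvalues 0 = λ₁ < λ₂ ≤ … ≤ λₙ. Let a, k_P, k_I ∈ ℝ satisfy a > 0, a + λ_i k_P > 0 for all i = 1,…,n, and k_I ≠ 0. Then the matrix M = [[k_P L + a Iₙ, −k_I L],[k_I L, 0_{n×n}]] has zero as an algebraically simple eigenvalue and all of its other eigenvalues μ ∈ ℂ satisfy Re μ > 0. -/

import Mathlib

open Matrix BigOperators

open Polynomial in
lemma aux_det_block {n : ℕ} (A B C' : Matrix (Fin n) (Fin n) ℝ[X]) :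
    (Matrix.fromBlocks A B C' ((X : ℝ[X]) • (1 : Matrix (Fin n) (Fin n) ℝ[X]))).det
      = ((X : ℝ[X]) • A - B * C').det := by
  have h : Matrix.fromBlocks A B C' ((X : ℝ[X]) • (1 : Matrix (Fin n) (Fin n) ℝ[X])) *
      Matrix.fromBlocks ((X : ℝ[X]) • (1 : Matrix (Fin n) (Fin n) ℝ[X])) 0 (-C') 1
      = Matrix.fromBlocks ((X : ℝ[X]) • A - B * C') B 0
          ((X : ℝ[X]) • (1 : Matrix (Fin n) (Fin n) ℝ[X])) := by
    rw [Matrix.fromBlocks_multiply]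
    congr 1 <;> simp [sub_eq_add_neg]
  have h2 := congrArg Matrix.det h
  rw [Matrix.det_mul, Matrix.det_fromBlocks_zero₁₂, Matrix.det_fromBlocks_zero₂₁, Matrix.det_one,
    mul_one] at h2
  refine mul_right_cancel₀ ?_ h2
  rw [Matrix.det_smul, Matrix.det_one, mul_one]
  exact pow_ne_zero _ X_ne_zero

open Polynomial in
lemma aux_charpoly {n : ℕ} (L U V : Matrix (Fin n) (Fin n) ℝ) (d : Fin n → ℝ)
    (hUV : U * V = 1) (hVU : V * U = 1) (hL : L = U * diagonal d * V) (a kP kI : ℝ) :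
    (Matrix.fromBlocks (kP • L + a • (1 : Matrix (Fin n) (Fin n) ℝ))
      (-(kI • L)) (kI • L) (0 : Matrix (Fin n) (Fin n) ℝ)).charpoly =
    ∏ i, (X ^ 2 - C (a + kP * d i) * X + C (kI ^ 2 * d i ^ 2) : ℝ[X]) := by
  have hUV' : U.map C * V.map C = (1 : Matrix (Fin n) (Fin n) ℝ[X]) := by
    rw [← Matrix.map_mul, hUV]; simp
  have hVU' : V.map C * U.map C = (1 : Matrix (Fin n) (Fin n) ℝ[X]) := by
    rw [← Matrix.map_mul, hVU]; simp
  have hL' : L.map C = U.map C * diagonal (fun i => C (d i)) * V.map C := by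
    rw [hL, Matrix.map_mul, Matrix.map_mul, Matrix.diagonal_map (by simp)]
  have h0 : charmatrix (0 : Matrix (Fin n) (Fin n) ℝ) = (X : ℝ[X]) • 1 := by
    simp [charmatrix, Matrix.smul_one_eq_diagonal]
  have h1 : charmatrix (kP • L + a • (1 : Matrix (Fin n) (Fin n) ℝ)) =
      (X : ℝ[X]) • 1 - ((C kP : ℝ[X]) • L.map C + (C a : ℝ[X]) • 1) := by
    ext i j : 1
    by_cases h : i = j <;> simp [charmatrix, h, Matrix.one_apply]
  have h2 : (kI • L).map C = (C kI : ℝ[X]) • L.map C := by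
    ext i j : 1; simp
  have h3 : (-(kI • L)).map C = -((C kI : ℝ[X]) • L.map C) := by
    ext i j : 1; simp
  rw [Matrix.charpoly, charmatrix_fromBlocks, h0, aux_det_block, h1, h2, h3]
  have key : (X : ℝ[X]) • ((X : ℝ[X]) • (1 : Matrix (Fin n) (Fin n) ℝ[X]) -
      ((C kP : ℝ[X]) • L.map C + (C a : ℝ[X]) • 1)) -
      (-(-((C kI : ℝ[X]) • L.map C))) * (-((C kI : ℝ[X]) • L.map C)) =
      U.map C * diagonal
        (fun i => (X ^ 2 - C (a + kP * d i) * X + C (kI ^ 2 * d i ^ 2) : ℝ[X])) * V.map C := by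
    have hd : diagonal
        (fun i => (X ^ 2 - C (a + kP * d i) * X + C (kI ^ 2 * d i ^ 2) : ℝ[X])) =
        (X ^ 2 - X * C a : ℝ[X]) • 1 - (X * C kP : ℝ[X]) • diagonal (fun i => C (d i))
         + (C kI ^ 2 : ℝ[X]) • (diagonal (fun i => C (d i)) * diagonal (fun i => C (d i))) := by
      ext i j : 1
      by_cases h : i = j
      · subst h; simp; ring
      · simp [h]
    have hLL : L.map C * L.map C = U.map C *
        (diagonal (fun i => C (d i)) * diagonal (fun i => C (d i))) * V.map C := by
      rw [hL']
      calc _ = U.map C * diagonal (fun i => C (d i)) * (V.map C * U.map C) *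
            diagonal (fun i => C (d i)) * V.map C := by simp only [Matrix.mul_assoc]
        _ = _ := by rw [hVU']; simp only [Matrix.mul_assoc, Matrix.one_mul]
    rw [hd, Matrix.mul_add, Matrix.mul_sub, Matrix.add_mul, Matrix.sub_mul]
    simp only [Matrix.mul_smul, Matrix.smul_mul, ← hLL, ← hL', Matrix.mul_one, hUV', neg_neg,
      Matrix.mul_neg]
    module
  rw [key, Matrix.det_mul, Matrix.det_mul, mul_right_comm, ← Matrix.det_mul, hUV', Matrix.det_one,
    one_mul, Matrix.det_diagonal]

open Polynomial in
lemma aux_mult {ι : Type*} (s : Finset ι) (p : ι → ℝ[X]) (hp : ∀ i, p i ≠ 0) :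
    (∏ i ∈ s, p i).rootMultiplicity 0 = ∑ i ∈ s, (p i).rootMultiplicity 0 := by
  classical
  induction s using Finset.induction_on with
  | empty => simp
  | insert i s hi ih =>
    rw [Finset.prod_insert hi, Finset.sum_insert hi, rootMultiplicity_mul, ih]
    exact mul_ne_zero (hp i) (Finset.prod_ne_zero_iff.2 fun j _ => hp j)

open Polynomial in
lemma aux_ne (b c : ℝ) : (X ^ 2 - C b * X + C c : ℝ[X]) ≠ 0 := by
  intro h
  have := congrArg (fun p => coeff p 2) h
  simp [coeff_X, coeff_C] at this

/-- For a symmetric PSD matrix `L` with algebraically simple zero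
eigenvalue, and scalars `a > 0`, `k_P` with `a + λ k_P > 0` for every eigenvalue `λ`
of `L`, and `k_I ≠ 0`, the block matrix `M = [[k_P L + a I, -k_I L],[k_I L, 0]]` has
zero as an algebraically simple eigenvalue and all other eigenvalues with positive
real part. -/
theorem second_order_update_matrix_stability
    {n : ℕ} (L : Matrix (Fin n) (Fin n) ℝ)
    (hPSD : L.PosSemidef)
    (hsimple : (Matrix.charpoly L).rootMultiplicity 0 = 1)
    (a kP kI : ℝ) (ha : 0 < a)
    (hshift : ∀ lam : ℝ, Module.End.HasEigenvalue (Matrix.toLin' L) lam →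
      0 < a + lam * kP)
    (hkI : kI ≠ 0)
    (M : Matrix (Fin n ⊕ Fin n) (Fin n ⊕ Fin n) ℝ)
    (hM : M = Matrix.fromBlocks (kP • L + a • (1 : Matrix (Fin n) (Fin n) ℝ))
      (-(kI • L)) (kI • L) (0 : Matrix (Fin n) (Fin n) ℝ)) :
    (Matrix.charpoly (M.map (algebraMap ℝ ℂ))).rootMultiplicity 0 = 1 ∧
      ∀ μ : ℂ, Module.End.HasEigenvalue
          (Matrix.toLin' (M.map (algebraMap ℝ ℂ))) μ → μ ≠ 0 → 0 < μ.re := by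
  have hH := hPSD.isHermitian
  set d := hH.eigenvalues with hd
  have hch : L.charpoly = ∏ i, (Polynomial.X - Polynomial.C (d i)) := by
    simpa using hH.charpoly_eq
  have hMch : M.charpoly = ∏ i, (Polynomial.X ^ 2 - Polynomial.C (a + kP * d i) * Polynomial.X
      + Polynomial.C (kI ^ 2 * d i ^ 2)) := by
    rw [hM]
    refine aux_charpoly L (hH.eigenvectorUnitary : Matrix (Fin n) (Fin n) ℝ)
      (star (hH.eigenvectorUnitary : Matrix (Fin n) (Fin n) ℝ)) d ?_ ?_ ?_ a kP kI
    · exact Unitary.coe_mul_star_self _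
    · exact Unitary.coe_star_mul_self _
    · have := hH.spectral_theorem
      rw [Unitary.conjStarAlgAut_apply] at this
      exact this
  have hs : ∀ i, 0 < a + kP * d i := by
    intro i
    have h : Module.End.HasEigenvalue (Matrix.toLin' L) (d i) := by
      rw [Module.End.hasEigenvalue_iff_isRoot_charpoly, Matrix.charpoly_toLin', hch,
        Polynomial.IsRoot.def, Polynomial.eval_prod]
      exact Finset.prod_eq_zero (Finset.mem_univ i) (by simp)
    have := hshift _ h
    linarith [mul_comm kP (d i)]
  have hmap : (M.map (algebraMap ℝ ℂ)).charpoly = M.charpoly.map (algebraMap ℝ ℂ) :=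
    Matrix.charpoly_map M (algebraMap ℝ ℂ)
  constructor
  · have h := Polynomial.eq_rootMultiplicity_map (p := M.charpoly)
      (algebraMap ℝ ℂ).injective 0
    rw [map_zero] at h
    rw [hmap, ← h, hMch, aux_mult _ _ (fun i => aux_ne _ _), ← hsimple, hch,
      aux_mult _ _ (fun i => Polynomial.X_sub_C_ne_zero _)]
    refine Finset.sum_congr rfl fun i _ => ?_
    by_cases h0 : d i = 0
    · have e : (Polynomial.X ^ 2 - Polynomial.C (a + kP * d i) * Polynomial.X
          + Polynomial.C (kI ^ 2 * d i ^ 2)) =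
          (Polynomial.X - Polynomial.C (d i)) * (Polynomial.X - Polynomial.C a) := by
        simp [h0]; ring
      rw [e, Polynomial.rootMultiplicity_mul (mul_ne_zero (Polynomial.X_sub_C_ne_zero _)
        (Polynomial.X_sub_C_ne_zero _)), Polynomial.rootMultiplicity_eq_zero
        (p := Polynomial.X - Polynomial.C a), add_zero]
      simp [ha.ne']
    · rw [Polynomial.rootMultiplicity_eq_zero, Polynomial.rootMultiplicity_eq_zero]
      · simp [h0]
      · simp [h0, hkI]
  · intro μ hμ hne
    rw [Module.End.hasEigenvalue_iff_isRoot_charpoly, Matrix.charpoly_toLin', hmap, hMch,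
      Polynomial.IsRoot.def, Polynomial.eval_map, Polynomial.eval₂_finsetProd,
      Finset.prod_eq_zero_iff] at hμ
    obtain ⟨i, -, hi⟩ := hμ
    have hsi := hs i
    generalize a + kP * d i = s at hi hsi
    have hp : 0 ≤ kI ^ 2 * d i ^ 2 := by positivity
    generalize kI ^ 2 * d i ^ 2 = p at hi hp
    simp only [Polynomial.eval₂_add, Polynomial.eval₂_sub, Polynomial.eval₂_mul,
      Polynomial.eval₂_pow, Polynomial.eval₂_X, Polynomial.eval₂_C] at hi
    have hre := congrArg Complex.re hi
    have him := congrArg Complex.im hi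
    simp [pow_two] at hre him
    by_cases hy : μ.im = 0
    · have hx : μ.re ≠ 0 := fun h => hne (Complex.ext h hy)
      rw [hy] at hre
      have : 0 < μ.re * μ.re := mul_self_pos.2 hx
      by_contra hneg
      push Not at hneg
      nlinarith
    · have : μ.im * (2 * μ.re - s) = 0 := by linarith
      rcases mul_eq_zero.1 this with h | h
      · exact absurd h hy
      · linarith
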